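/- Let A ∈ ℝ^{m×n} have unit rows, b ∈ ℝ^m, ε ∈ (0,1), and let P be a (fixed, deterministic) d×n real matrix. Let x₀ ∈ ℝⁿ and r* > 0 be such that Ax₀ ≤ b − r* componentwise and ‖x₀‖ ≤ 1 − r*. Assume that (i) A PᵀP x₀ ≤ Ax₀ + ε componentwise, (ii) ‖A_i Pᵀ‖ ≤ 1 + ε for every row A_i of A, and (iii) ‖P x₀‖ ≤ (1+ε)‖x₀‖. Then the closed ball of center Px₀ and radius (1−ε)r* is contained in S⁺_ε = {u ∈ ℝ^d : APᵀu ≤ b+ε, ‖u‖ ≤ 1+ε}. -/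

import Mathlib

/-!
Write `u = P x₀ + v` with `‖v‖ ≤ (1 - ε) r*`. By Cauchy–Schwarz, moving from `P x₀` to `u` raises
each constraint value by at most `(1 + ε)(1 - ε) r* ≤ r*`, which is absorbed by the slack `r*` of
`x₀`. By the triangle inequality, `‖u‖ ≤ (1 + ε)(1 - r*) + (1 - ε) r* ≤ 1 + ε`.
-/

open Matrix

/-- The Euclidean norm of a vector in `ℝⁿ`. -/
noncomputable def euclNorm {k : ℕ} (x : Fin k → ℝ) : ℝ := Real.sqrt (∑ i, x i ^ 2)

theorem euclNorm_eq_norm {k : ℕ} (x : Fin k → ℝ) : euclNorm x = ‖WithLp.toLp 2 x‖ := by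
  simp [euclNorm, EuclideanSpace.norm_eq]

theorem euclNorm_add_le {k : ℕ} (x y : Fin k → ℝ) :
    euclNorm (x + y) ≤ euclNorm x + euclNorm y := by
  simp only [euclNorm_eq_norm, WithLp.toLp_add]
  exact norm_add_le _ _

theorem dotProduct_le_euclNorm_mul {k : ℕ} (x y : Fin k → ℝ) :
    x ⬝ᵥ y ≤ euclNorm x * euclNorm y :=
  Real.sum_mul_le_sqrt_mul_sqrt _ x y

/-- **Deterministic core of the fullness lemma.** Let `A` have unit rows, `ε ∈ (0,1)`, `P` a fixed
`d × n` matrix, and `x₀ ∈ ℝⁿ`, `r* > 0` with `Ax₀ ≤ b − r*` and `‖x₀‖ ≤ 1 − r*`. If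
(i) `APᵀPx₀ ≤ Ax₀ + ε`, (ii) `‖AᵢPᵀ‖ ≤ 1+ε` for each row `Aᵢ`, and (iii) `‖Px₀‖ ≤ (1+ε)‖x₀‖`,
then the closed ball of center `Px₀` and radius `(1−ε)r*` is contained in
`S⁺_ε = {u : APᵀu ≤ b+ε, ‖u‖ ≤ 1+ε}`. -/
theorem stmt12
    {d n m : ℕ} (A : Matrix (Fin m) (Fin n) ℝ) (hA : ∀ i, euclNorm (A i) = 1)
    (b : Fin m → ℝ) (ε : ℝ) (hε0 : 0 < ε) (hε1 : ε < 1)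
    (P : Matrix (Fin d) (Fin n) ℝ)
    (x₀ : Fin n → ℝ) (rstar : ℝ) (hr : 0 < rstar)
    (hx₀A : ∀ i, A.mulVec x₀ i ≤ b i - rstar)
    (hx₀n : euclNorm x₀ ≤ 1 - rstar)
    (hi : ∀ i, A.mulVec (Pᵀ.mulVec (P.mulVec x₀)) i ≤ A.mulVec x₀ i + ε)
    (hii : ∀ i, euclNorm ((A * Pᵀ) i) ≤ 1 + ε)
    (hiii : euclNorm (P.mulVec x₀) ≤ (1 + ε) * euclNorm x₀) :
    ∀ u : Fin d → ℝ, euclNorm (u - P.mulVec x₀) ≤ (1 - ε) * rstar →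
      (∀ i, A.mulVec (Pᵀ.mulVec u) i ≤ b i + ε) ∧ euclNorm u ≤ 1 + ε := by
  intro u hu
  have hu_split : u = P.mulVec x₀ + (u - P.mulVec x₀) := by abel
  constructor
  · intro i
    have h_split : A.mulVec (Pᵀ.mulVec u) i
        = A.mulVec (Pᵀ.mulVec (P.mulVec x₀)) i + (A * Pᵀ) i ⬝ᵥ (u - P.mulVec x₀) := by
      conv_lhs => rw [hu_split]
      rw [Matrix.mulVec_add, Matrix.mulVec_add, Pi.add_apply,
        Matrix.mulVec_mulVec (u - P.mulVec x₀) A Pᵀ]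
      rfl
    have h_cs : (A * Pᵀ) i ⬝ᵥ (u - P.mulVec x₀) ≤ (1 + ε) * ((1 - ε) * rstar) :=
      (dotProduct_le_euclNorm_mul _ _).trans
        (mul_le_mul (hii i) hu (Real.sqrt_nonneg _) (by linarith))
    nlinarith [hi i, hx₀A i, mul_nonneg (sq_nonneg ε) hr.le]
  · have h_tri := euclNorm_add_le (P.mulVec x₀) (u - P.mulVec x₀)
    rw [← hu_split] at h_tri
    nlinarith [mul_le_mul_of_nonneg_left hx₀n (by linarith : (0 : ℝ) ≤ 1 + ε), mul_pos hε0 hr]
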